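/- arXiv:2403.03676 — 4 statements merged into one kernel-verified Lean document; each statement's English description precedes it below -/
import Mathlib

section
/- Let L and L_p be real m×m matrices with operator norms ‖L‖₂ ≤ 1 and ‖L_p‖₂ ≤ 1, and let c_1, …, c_N be real numbers (with an arbitrary real c_0). Then ‖Σ_{n=0}^{N} c_n·(−L_p)^n/n! − Σ_{n=0}^{N} c_n·(−L)^n/n!‖₂ ≤ (Σ_{n=1}^{N} |c_n|/(n−1)!) · ‖L_p − L‖₂. In particular, the spectral filter h(L) = Σ_{n=0}^{N} c_n·(−L)^n/n! is linearly stable with stability constant C = Σ_{n=1}^{N} |c_n|/(n−1)!. -/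
/-- The operator norm (spectral norm) of a real square matrix, i.e. the norm
induced by the Euclidean vector norm. -/
noncomputable def l2OpNorm {m : ℕ} (A : Matrix (Fin m) (Fin m) ℝ) : ℝ :=
  ‖Matrix.toEuclideanCLM (𝕜 := ℝ) A‖

theorem spc_pow_le {E : Type*} [NormedAddCommGroup E] [NormedSpace ℝ E] (A : E →L[ℝ] E)
    (hA : ‖A‖ ≤ 1) (k : ℕ) : ‖A ^ k‖ ≤ 1 := by
  induction k with
  | zero => rw [pow_zero]; exact ContinuousLinearMap.norm_id_le
  | succ k ih =>
    rw [pow_succ]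
    exact (norm_mul_le _ _).trans (mul_le_one₀ ih (norm_nonneg _) hA)

theorem spc_pow_sub_le {E : Type*} [NormedAddCommGroup E] [NormedSpace ℝ E] (A B : E →L[ℝ] E)
    (hA : ‖A‖ ≤ 1) (hB : ‖B‖ ≤ 1) (k : ℕ) : ‖A ^ k - B ^ k‖ ≤ k * ‖A - B‖ := by
  induction k with
  | zero => simp
  | succ k ih =>
    have e : A ^ (k+1) - B ^ (k+1) = A ^ k * (A - B) + (A ^ k - B ^ k) * B := by
      rw [pow_succ, pow_succ, mul_sub, sub_mul]; abel
    rw [e]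
    have h1 : ‖A ^ k * (A - B)‖ ≤ ‖A - B‖ :=
      (norm_mul_le _ _).trans (mul_le_of_le_one_left (norm_nonneg _) (spc_pow_le A hA k))
    have h2 : ‖(A ^ k - B ^ k) * B‖ ≤ ‖A ^ k - B ^ k‖ :=
      (norm_mul_le _ _).trans (mul_le_of_le_one_right (norm_nonneg _) hB)
    have h3 := norm_add_le (A ^ k * (A - B)) ((A ^ k - B ^ k) * B)
    push_cast
    linarith

/-- Stability of the SPCNet filter `h(L) = Σ_{n=0}^{N} c_n · (−L)^n / n!`:
for `‖L‖₂ ≤ 1` and `‖L_p‖₂ ≤ 1`,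
`‖h(L_p) − h(L)‖₂ ≤ (Σ_{n=1}^{N} |c_n|/(n−1)!) · ‖L_p − L‖₂`. -/
theorem spcnet_filter_linearly_stable {m : ℕ} (L Lp : Matrix (Fin m) (Fin m) ℝ)
    (hL : l2OpNorm L ≤ 1) (hLp : l2OpNorm Lp ≤ 1) (N : ℕ) (c : ℕ → ℝ) :
    l2OpNorm (∑ n ∈ Finset.range (N + 1), (c n / n.factorial) • (-Lp) ^ n -
        ∑ n ∈ Finset.range (N + 1), (c n / n.factorial) • (-L) ^ n) ≤
      (∑ n ∈ Finset.Icc 1 N, |c n| / (n - 1).factorial) * l2OpNorm (Lp - L) := by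
  unfold l2OpNorm at *
  simp only [map_sub, map_sum, map_smul, map_pow, map_neg]
  generalize Matrix.toEuclideanCLM (𝕜 := ℝ) L = B at *
  generalize Matrix.toEuclideanCLM (𝕜 := ℝ) Lp = A at *
  rw [← Finset.sum_sub_distrib, Finset.range_eq_Ico,
    Finset.sum_eq_sum_Ico_succ_bot (Nat.succ_pos N), Finset.sum_mul]
  simp only [pow_zero, sub_self, zero_add]
  have hI : Finset.Ico 1 (N + 1) = Finset.Icc 1 N := by
    ext x; simp only [Finset.mem_Ico, Finset.mem_Icc]; omega
  rw [hI]
  refine (norm_sum_le _ _).trans (Finset.sum_le_sum fun n hn => ?_)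
  have es : (c n / n.factorial) • (-A) ^ n - (c n / n.factorial) • (-B) ^ n
      = (c n / n.factorial) • ((-A) ^ n - (-B) ^ n) := (smul_sub _ _ _).symm
  refine (le_of_eq ((congrArg norm es).trans (norm_smul _ _))).trans ?_
  have h := spc_pow_sub_le (-A) (-B) (by rwa [norm_neg]) (by rwa [norm_neg]) n
  have e : ‖-A - -B‖ = ‖A - B‖ := by rw [← norm_neg]; congr 1; abel
  rw [e] at h
  refine (mul_le_mul_of_nonneg_left h (norm_nonneg _)).trans (le_of_eq ?_)
  obtain ⟨k, rfl⟩ : ∃ k, n = k + 1 := ⟨n - 1, by have := (Finset.mem_Icc.1 hn).1; omega⟩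
  have hk : ((k : ℝ) + 1) ≠ 0 := by positivity
  have hf : (k.factorial : ℝ) ≠ 0 := by positivity
  rw [Real.norm_eq_abs, abs_div, Nat.abs_cast, Nat.factorial_succ, Nat.add_sub_cancel]
  push_cast
  field_simp
end

section
/- For every real γ, every real t, and every natural number n, the n-th derivative of the function λ ↦ (1−λ)^γ·e^{tλ} (with (1−λ)^γ = exp(γ·log(1−λ))) evaluated at λ = 0 equals (−1)^n·C_n(γ,t), where C_n(γ,t) = Σ_{j=0}^{n} binom(n,j)·(−t)^j·∏_{i=0}^{n−j−1}(γ−i) is the Poisson–Charlier polynomial. -/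
/-- The Poisson–Charlier polynomial
`C_n(γ,t) = Σ_{j=0}^{n} binom(n,j)·(−t)^j·γ·(γ−1)⋯(γ−n+j+1)`, where the product
`γ·(γ−1)⋯(γ−n+j+1)` is the falling factorial `∏_{i=0}^{n−j−1}(γ−i)`. -/
noncomputable def poissonCharlier (γ t : ℝ) (n : ℕ) : ℝ :=
  ∑ j ∈ Finset.range (n + 1),
    (n.choose j : ℝ) * (-t) ^ j * ∏ i ∈ Finset.range (n - j), (γ - i)

/-- The `n`-th derivative of `λ ↦ (1−λ)^γ·e^{tλ}` (with `(1−λ)^γ = exp(γ·log(1−λ))`)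
at `λ = 0` equals `(−1)^n·C_n(γ,t)`. -/
theorem iteratedDeriv_generating_function_eq_poissonCharlier (γ t : ℝ) (n : ℕ) :
    iteratedDeriv n
        (fun lam : ℝ => Real.exp (γ * Real.log (1 - lam)) * Real.exp (t * lam)) 0 =
      (-1) ^ n * poissonCharlier γ t n := by
  have hcd : ContDiffAt ℝ n (fun lam : ℝ => Real.exp (γ * Real.log (1 - lam))) 0 := by
    have h1 : ContDiffAt ℝ n (fun lam : ℝ => 1 - lam) 0 := by fun_prop
    exact (contDiffAt_const.mul (h1.log (by norm_num))).exp
  have hce : ContDiffAt ℝ n (fun lam : ℝ => Real.exp (t * lam)) 0 := by fun_prop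
  have hpow : ∀ k : ℕ, iteratedDeriv k (fun lam : ℝ => Real.exp (γ * Real.log (1 - lam))) 0
      = (-1) ^ k * ∏ i ∈ Finset.range k, (γ - i) := by
    intro k
    have hev : (fun lam : ℝ => Real.exp (γ * Real.log (1 - lam)))
        =ᶠ[nhds 0] (fun lam : ℝ => (fun x : ℝ => x ^ γ) (1 - lam)) := by
      filter_upwards [Iio_mem_nhds (show (0 : ℝ) < 1 by norm_num)] with x hx
      have hx' : (0 : ℝ) < 1 - x := sub_pos.mpr hx
      simp only [Real.rpow_def_of_pos hx', mul_comm]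
    have hsub := congrFun (iteratedDeriv_comp_const_sub (n := k) (s := (1 : ℝ)) (f := fun x : ℝ => x ^ γ)) 0
    rw [hev.iteratedDeriv_eq k, hsub, iteratedDeriv_eq_iterate]
    simp [Real.iter_deriv_rpow_const, descPochhammer_eval_eq_prod_range]
  have hcomm : (fun lam : ℝ => Real.exp (γ * Real.log (1 - lam)) * Real.exp (t * lam))
      = (fun lam : ℝ => Real.exp (t * lam)) * (fun lam : ℝ => Real.exp (γ * Real.log (1 - lam))) := by
    funext x
    simp [mul_comm]
  rw [hcomm, iteratedDeriv_mul hce hcd, poissonCharlier, Finset.mul_sum]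
  refine Finset.sum_congr rfl fun j hj => ?_
  have hjn : j ≤ n := Nat.lt_succ_iff.mp (Finset.mem_range.mp hj)
  rw [hpow, iteratedDeriv_exp_const_mul]
  obtain ⟨m, rfl⟩ := Nat.exists_eq_add_of_le hjn
  have h2 : ((-1 : ℝ) ^ j) * (-1) ^ j = 1 := by rw [← mul_pow]; simp
  simp only [Nat.add_sub_cancel_left, mul_zero, Real.exp_zero, mul_one, neg_pow t, pow_add]
  linear_combination (-(((j + m).choose j : ℝ) * t ^ j * (-1) ^ m *
    ∏ i ∈ Finset.range m, (γ - i))) * h2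
end

section
/- Let L be any real m×m matrix, k a natural number, and t a real number. Then the matrix series Σ_{n=0}^{∞} C_n(k,t)·(−L)^n/n! converges and equals (I − L)^k · exp(t·L), where exp denotes the matrix exponential and C_n(γ,t) = Σ_{j=0}^{n} binom(n,j)·(−t)^j·∏_{i=0}^{n−j−1}(γ−i) is the Poisson–Charlier polynomial. -/
theorem pc_prod (k n : ℕ) :
    ∏ i ∈ Finset.range n, ((k : ℝ) - i) = (n.factorial : ℝ) * (k.choose n : ℝ) := by
  rw [← descPochhammer_eval_eq_prod_range, descPochhammer_eval_eq_descFactorial,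
    Nat.descFactorial_eq_factorial_mul_choose]
  push_cast
  rfl

theorem pc_normed {A : Type*} [NormedRing A] [NormedAlgebra ℝ A] [CompleteSpace A]
    (L : A) (k : ℕ) (t : ℝ) :
    HasSum (fun n : ℕ => (poissonCharlier (k : ℝ) t n / n.factorial) • (-L) ^ n)
      ((1 - L) ^ k * NormedSpace.exp (t • L)) := by
  have hf := NormedSpace.norm_expSeries_summable' (𝕂 := ℝ) (t • L)
  have hf' := NormedSpace.exp_series_hasSum_exp' (𝕂 := ℝ) (t • L)
  have hz : ∀ i ∉ Finset.range (k + 1), (k.choose i : ℝ) • (-L) ^ i = 0 := by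
    intro i hi
    rw [Nat.choose_eq_zero_of_lt (by simpa using hi)]
    simp
  have hg : Summable fun i : ℕ => ‖(k.choose i : ℝ) • (-L) ^ i‖ :=
    summable_of_ne_finset_zero (s := Finset.range (k + 1)) (fun i hi => by rw [hz i hi, norm_zero])
  have hg' : ∑' i : ℕ, (k.choose i : ℝ) • (-L) ^ i = (1 - L) ^ k := by
    rw [tsum_eq_sum hz, sub_eq_neg_add, (Commute.one_right (-L)).add_pow]
    refine Finset.sum_congr rfl fun i _ => ?_
    rw [one_pow, mul_one, ← (Nat.cast_commute _ _).eq, Nat.cast_smul_eq_nsmul, nsmul_eq_mul]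
  have h := hasSum_sum_range_mul_of_summable_norm hf hg
  have hc : Commute (NormedSpace.exp (t • L)) ((1 - L) ^ k) := by
    rw [← hf'.tsum_eq]
    refine Commute.tsum_left _ fun n => ?_
    refine Commute.smul_left (Commute.pow_pow (Commute.smul_left ?_ t) _ _) _
    exact (Commute.one_right L).sub_right (Commute.refl L)
  rw [hf'.tsum_eq, hg', hc.eq] at h
  convert h using 1
  funext n
  rw [poissonCharlier, Finset.sum_div, Finset.sum_smul]
  refine Finset.sum_congr rfl fun j hj => ?_
  have hj' : j ≤ n := Nat.lt_succ_iff.mp (Finset.mem_range.mp hj)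
  have e : (t • L) ^ j = (-t) ^ j • (-L) ^ j := by rw [← smul_pow, neg_smul_neg]
  rw [e, smul_smul, smul_mul_smul_comm, ← pow_add, Nat.add_sub_cancel' hj', pc_prod,
    Nat.cast_choose ℝ hj']
  congr 1
  have := Nat.factorial_ne_zero n
  have := Nat.factorial_ne_zero j
  have := Nat.factorial_ne_zero (n - j)
  field_simp

/-- For any real `m × m` matrix `L`, natural number `k` and real `t`, the matrix
series `Σ_{n=0}^{∞} C_n(k,t)·(−L)^n/n!` converges and equals `(I − L)^k · exp(t·L)`,
where `exp` is the matrix exponential. -/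
theorem poissonCharlier_matrix_generating_function {m : ℕ}
    (L : Matrix (Fin m) (Fin m) ℝ) (k : ℕ) (t : ℝ) :
    HasSum (fun n : ℕ => (poissonCharlier (k : ℝ) t n / n.factorial) • (-L) ^ n)
      ((1 - L) ^ k * NormedSpace.exp (t • L)) := by
  letI : NormedRing (Matrix (Fin m) (Fin m) ℝ) := Matrix.linftyOpNormedRing
  letI : NormedAlgebra ℝ (Matrix (Fin m) (Fin m) ℝ) := Matrix.linftyOpNormedAlgebra
  exact pc_normed L k t
end

section
/- Let L and L_p be real m×m matrices with operator norms ‖L‖₂ ≤ 1 and ‖L_p‖₂ ≤ 1, let c_0, c_1, …, c_N be real numbers, and define the filter h(M) = Σ_{n=0}^{N} c_n·(−M)^n/n!. Then for every vector x ∈ ℝ^m, ‖(I + h(L_p))x − (I + h(L))x‖ ≤ (Σ_{n=1}^{N} |c_n|/(n−1)!)·‖L_p − L‖₂·‖x‖, where ‖x‖ is the Euclidean norm. -/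
/-- The SPCNet filter `h(M) = Σ_{n=0}^{N} c_n·(−M)^n/n!`. -/
noncomputable def spcnetFilter {m : ℕ} (N : ℕ) (c : ℕ → ℝ)
    (M : Matrix (Fin m) (Fin m) ℝ) : Matrix (Fin m) (Fin m) ℝ :=
  ∑ n ∈ Finset.range (N + 1), (c n / n.factorial) • (-M) ^ n

theorem clm_pow_norm_le {E : Type*} [NormedAddCommGroup E] [NormedSpace ℝ E]
    (A : E →L[ℝ] E) (hA : ‖A‖ ≤ 1) (n : ℕ) : ‖A ^ n‖ ≤ 1 := by
  induction n with
  | zero => rw [pow_zero]; exact ContinuousLinearMap.norm_id_le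
  | succ k ih =>
    rw [pow_succ]
    exact (norm_mul_le _ _).trans (mul_le_one₀ ih (norm_nonneg _) hA)

theorem clm_pow_sub_norm_le {E : Type*} [NormedAddCommGroup E] [NormedSpace ℝ E]
    (A B : E →L[ℝ] E) (hA : ‖A‖ ≤ 1) (hB : ‖B‖ ≤ 1) (n : ℕ) :
    ‖A ^ n - B ^ n‖ ≤ n * ‖A - B‖ := by
  induction n with
  | zero => simp
  | succ k ih =>
    have e : A ^ (k + 1) - B ^ (k + 1) = A ^ k * (A - B) + (A ^ k - B ^ k) * B := by
      rw [pow_succ, pow_succ]; noncomm_ring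
    have h1 : ‖A ^ k * (A - B)‖ ≤ ‖A - B‖ :=
      (norm_mul_le _ _).trans
        (mul_le_of_le_one_left (norm_nonneg _) (clm_pow_norm_le A hA k))
    have h2 : ‖(A ^ k - B ^ k) * B‖ ≤ ‖A ^ k - B ^ k‖ :=
      (norm_mul_le _ _).trans (mul_le_of_le_one_right (norm_nonneg _) hB)
    rw [e]
    push_cast
    linarith [norm_add_le (A ^ k * (A - B)) ((A ^ k - B ^ k) * B)]

/-- For `‖L‖₂ ≤ 1`, `‖L_p‖₂ ≤ 1` and every vector `x ∈ ℝ^m` (with its Euclidean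
norm), `‖(I + h(L_p))x − (I + h(L))x‖ ≤ (Σ_{n=1}^{N} |c_n|/(n−1)!)·‖L_p − L‖₂·‖x‖`. -/
theorem spcnet_propagation_stable {m : ℕ} (L Lp : Matrix (Fin m) (Fin m) ℝ)
    (hL : l2OpNorm L ≤ 1) (hLp : l2OpNorm Lp ≤ 1) (N : ℕ) (c : ℕ → ℝ)
    (x : EuclideanSpace ℝ (Fin m)) :
    ‖Matrix.toEuclideanCLM (𝕜 := ℝ) (1 + spcnetFilter N c Lp) x -
        Matrix.toEuclideanCLM (𝕜 := ℝ) (1 + spcnetFilter N c L) x‖ ≤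
      (∑ n ∈ Finset.Icc 1 N, |c n| / (n - 1).factorial) * l2OpNorm (Lp - L) * ‖x‖ := by
  rw [← ContinuousLinearMap.sub_apply]
  refine (ContinuousLinearMap.le_opNorm _ _).trans
    (mul_le_mul_of_nonneg_right ?_ (norm_nonneg _))
  unfold l2OpNorm at *
  rw [← map_sub, add_sub_add_left_eq_sub]
  unfold spcnetFilter
  rw [← Finset.sum_sub_distrib, map_sum, Finset.sum_range_succ', Finset.sum_mul]
  simp only [pow_zero, sub_self, map_zero, add_zero]
  have e : ∀ f : ℕ → ℝ, ∑ n ∈ Finset.Icc 1 N, f n = ∑ n ∈ Finset.range N, f (n + 1) := by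
    intro f
    rw [Finset.range_eq_Ico, Finset.sum_Ico_add' f 0 N 1]
    rfl
  rw [e]
  refine (norm_sum_le _ _).trans (Finset.sum_le_sum fun k _ => ?_)
  rw [← smul_sub, map_smul, map_sub, map_pow, map_pow, map_neg, map_neg, norm_smul]
  have h := clm_pow_sub_norm_le (-Matrix.toEuclideanCLM (𝕜 := ℝ) Lp)
    (-Matrix.toEuclideanCLM (𝕜 := ℝ) L) (by rwa [norm_neg]) (by rwa [norm_neg]) (k + 1)
  rw [neg_sub_neg, norm_sub_rev (Matrix.toEuclideanCLM (𝕜 := ℝ) L), ← map_sub] at h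
  refine (mul_le_mul_of_nonneg_left h (norm_nonneg _)).trans (le_of_eq ?_)
  rw [← mul_assoc]
  congr 1
  rw [Real.norm_eq_abs, abs_div, Nat.abs_cast, Nat.factorial_succ, Nat.add_sub_cancel]
  have : (k.factorial : ℝ) ≠ 0 := by positivity
  have : (k + 1 : ℝ) ≠ 0 := by positivity
  push_cast
  field_simp
end
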